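/- For every prime power q, one has h(1) · h(3) < h(2)^2. -/

import Mathlib

/-!
The inequality holds with room to spare and follows from termwise comparison. Put `x = |P|⁻¹ ≤ 1/2`,
`u = u_P`, `v = v_P`. Then `u - v = -log (1 - x²)` lies between `0` and `x² / (1 - x²)`, which is at
most `4/3 * x²` and at most `1/3`, while `u ≥ x` and `v ≥ 0`. Hence
* `u - v ≤ 4/3 * (u² + v²)`, and
* `u³ - v³ = (u - v) (u² + u v + v²) ≤ 1/3 * 3/2 * (u² + v²) = 1/2 * (u² + v²)`.

Summing over `P` gives `h(1) ≤ 4/3 * h(2)` and `h(3) ≤ 1/2 * h(2)`, so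
`h(1) h(3) ≤ 2/3 * h(2)² < h(2)²` because `h(2) > 0`. The series converge since `u² + v² ≤ 5 x²` and
there are at most `q^d` monic polynomials of degree `d`, so that `∑ |P|⁻² ≤ ∑ q^(-d)`.
-/

open Polynomial

/-- `u_P = -log(1 - |P|⁻¹)` where `|P| = q^(deg P)`. -/
noncomputable def uP {Fq : Type} [Field Fq] [Fintype Fq] (P : Polynomial Fq) : ℝ :=
  -Real.log (1 - ((Fintype.card Fq : ℝ) ^ P.natDegree)⁻¹)

/-- `v_P = log(1 + |P|⁻¹)` where `|P| = q^(deg P)`. -/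
noncomputable def vP {Fq : Type} [Field Fq] [Fintype Fq] (P : Polynomial Fq) : ℝ :=
  Real.log (1 + ((Fintype.card Fq : ℝ) ^ P.natDegree)⁻¹)

/-- `h(λ) = ∑_P (u_P^λ + (-1)^λ v_P^λ)`, the sum over all monic irreducible
polynomials `P ∈ Fq[X]`. -/
noncomputable def hfun (Fq : Type) [Field Fq] [Fintype Fq] (l : ℕ) : ℝ :=
  ∑' P : {P : Polynomial Fq // P.Monic ∧ Irreducible P},
    (uP P.1 ^ l + (-1 : ℝ) ^ l * vP P.1 ^ l)

/-- The elementary estimates on `u = -log (1 - x)` and `v = log (1 + x)` for `0 < x ≤ 1/2` behind the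
termwise comparison. -/
lemma log_bounds {x : ℝ} (hx0 : 0 < x) (hx : x ≤ 1 / 2) :
    x ≤ -Real.log (1 - x) ∧ -Real.log (1 - x) ≤ 2 * x ∧
    0 ≤ Real.log (1 + x) ∧ Real.log (1 + x) ≤ x ∧
    0 ≤ -Real.log (1 - x) - Real.log (1 + x) ∧
    -Real.log (1 - x) - Real.log (1 + x) ≤ 4 / 3 * x ^ 2 := by
  have h1 := Real.log_le_sub_one_of_pos (show 0 < 1 - x by linarith)
  have h2 := Real.one_sub_inv_le_log_of_pos (show 0 < 1 - x by linarith)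
  have h3 := Real.log_le_sub_one_of_pos (show 0 < 1 + x by linarith)
  have h4 : 0 ≤ Real.log (1 + x) := Real.log_nonneg (by linarith)
  have hmul : Real.log (1 - x) + Real.log (1 + x) = Real.log (1 - x ^ 2) := by
    rw [← Real.log_mul (by linarith) (by linarith)]
    ring_nf
  have hpos : 0 < 1 - x ^ 2 := by nlinarith
  have h5 := Real.log_le_sub_one_of_pos hpos
  have h6 := Real.one_sub_inv_le_log_of_pos hpos
  have h7 : (1 - x)⁻¹ ≤ 1 + 2 * x := by
    rw [inv_le_iff_one_le_mul₀ (by linarith)]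
    nlinarith
  have h8 : (1 - x ^ 2)⁻¹ ≤ 1 + 4 / 3 * x ^ 2 := by
    rw [inv_le_iff_one_le_mul₀ hpos]
    have : x ^ 2 ≤ 1 / 4 := by nlinarith
    nlinarith [sq_nonneg x]
  exact ⟨by linarith, by linarith, h4, by linarith, by nlinarith, by linarith⟩

/-- A monic polynomial encoded by its degree and its coefficients below the leading one. -/
def lowerCoeffs (Fq : Type) [Field Fq] (P : {P : Polynomial Fq // P.Monic ∧ Irreducible P}) :
    Σ d : ℕ, (Fin d → Fq) :=
  ⟨P.1.natDegree, fun i => P.1.coeff i⟩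

lemma lowerCoeffs_injective (Fq : Type) [Field Fq] :
    Function.Injective (lowerCoeffs Fq) := by
  intro P Q h
  have hd : P.1.natDegree = Q.1.natDegree := congrArg Sigma.fst h
  apply Subtype.ext
  ext n
  rcases lt_trichotomy n P.1.natDegree with hn | hn | hn
  · have hc := congrArg
      (fun s : (Σ d : ℕ, (Fin d → Fq)) => if hlt : n < s.1 then s.2 ⟨n, hlt⟩ else 0) h
    have hn' : n < Q.1.natDegree := by omega
    simpa [lowerCoeffs, hn, hn'] using hc
  · rw [hn, P.2.1.coeff_natDegree, hd, Q.2.1.coeff_natDegree]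
  · rw [Polynomial.coeff_eq_zero_of_natDegree_lt hn,
      Polynomial.coeff_eq_zero_of_natDegree_lt (by omega)]

lemma summable_sigma_inv_sq (Fq : Type) [Fintype Fq] {q : ℝ} (hq : 1 < q)
    (hcard : (Fintype.card Fq : ℝ) = q) :
    Summable fun s : (Σ d : ℕ, (Fin d → Fq)) => ((q ^ s.1)⁻¹) ^ 2 := by
  refine (summable_sigma_of_nonneg fun s => sq_nonneg _).2 ⟨fun d => Summable.of_finite, ?_⟩
  have hg : Summable fun d : ℕ => (q⁻¹) ^ d :=
    summable_geometric_of_lt_one (by positivity) (inv_lt_one_of_one_lt₀ hq)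
  refine hg.congr fun d => ?_
  have hne : q ^ d ≠ 0 := by positivity
  change _ = ∑' _ : Fin d → Fq, ((q ^ d)⁻¹) ^ 2
  rw [tsum_fintype, Finset.sum_const, Finset.card_univ, Fintype.card_fun, Fintype.card_fin,
    nsmul_eq_mul, Nat.cast_pow, hcard, inv_pow]
  field_simp

lemma summable_inv_sq (Fq : Type) [Field Fq] [Fintype Fq] :
    Summable fun P : {P : Polynomial Fq // P.Monic ∧ Irreducible P} =>
      (((Fintype.card Fq : ℝ) ^ P.1.natDegree)⁻¹) ^ 2 := by
  have hq : (1 : ℝ) < Fintype.card Fq := by exact_mod_cast Fintype.one_lt_card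
  exact ((summable_sigma_inv_sq Fq hq rfl).comp_injective (lowerCoeffs_injective Fq)).congr
    fun P => rfl

/-- For every prime power `q` (realized as the cardinality of a finite field `Fq`),
one has `h(1) h(3) < h(2)^2`. -/
theorem hfun_one_mul_three_lt (Fq : Type) [Field Fq] [Fintype Fq] :
    hfun Fq 1 * hfun Fq 3 < hfun Fq 2 ^ 2 := by
  have hq : (2 : ℝ) ≤ Fintype.card Fq := by exact_mod_cast Fintype.one_lt_card
  have key : ∀ P : {P : Polynomial Fq // P.Monic ∧ Irreducible P},
      0 < uP P.1 ^ 2 + (-1 : ℝ) ^ 2 * vP P.1 ^ 2 ∧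
      uP P.1 ^ 2 + (-1 : ℝ) ^ 2 * vP P.1 ^ 2
        ≤ 5 * (((Fintype.card Fq : ℝ) ^ P.1.natDegree)⁻¹) ^ 2 ∧
      0 ≤ uP P.1 ^ 1 + (-1 : ℝ) ^ 1 * vP P.1 ^ 1 ∧
      uP P.1 ^ 1 + (-1 : ℝ) ^ 1 * vP P.1 ^ 1
        ≤ 4 / 3 * (uP P.1 ^ 2 + (-1 : ℝ) ^ 2 * vP P.1 ^ 2) ∧
      0 ≤ uP P.1 ^ 3 + (-1 : ℝ) ^ 3 * vP P.1 ^ 3 ∧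
      uP P.1 ^ 3 + (-1 : ℝ) ^ 3 * vP P.1 ^ 3
        ≤ 1 / 2 * (uP P.1 ^ 2 + (-1 : ℝ) ^ 2 * vP P.1 ^ 2) := by
    intro P
    have hx0 : 0 < ((Fintype.card Fq : ℝ) ^ P.1.natDegree)⁻¹ := by positivity
    have hx : ((Fintype.card Fq : ℝ) ^ P.1.natDegree)⁻¹ ≤ 1 / 2 := by
      rw [one_div]
      apply inv_anti₀ two_pos
      exact hq.trans (le_self_pow₀ (by linarith) P.2.2.natDegree_pos.ne')
    obtain ⟨h1, h2, h3, h4, h5, h6⟩ := log_bounds hx0 hx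
    change _ ≤ uP P.1 at h1
    change uP P.1 ≤ _ at h2
    change 0 ≤ vP P.1 at h3
    change vP P.1 ≤ _ at h4
    change 0 ≤ uP P.1 - vP P.1 at h5
    change uP P.1 - vP P.1 ≤ _ at h6
    generalize ((Fintype.card Fq : ℝ) ^ P.1.natDegree)⁻¹ = x at *
    generalize uP P.1 = u at *
    generalize vP P.1 = v at *
    have hu : x ^ 2 ≤ u ^ 2 := by gcongr
    have hu' : u ^ 2 ≤ (2 * x) ^ 2 := by gcongr; linarith
    have hv' : v ^ 2 ≤ x ^ 2 := by gcongr
    have hx2 : 0 < x ^ 2 := by positivity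
    have hx4 : x ^ 2 ≤ 1 / 4 := by nlinarith
    have hv0 := sq_nonneg v
    have hfac : u ^ 3 + (-1) ^ 3 * v ^ 3 = (u - v) * (u ^ 2 + u * v + v ^ 2) := by ring
    have hu0 : 0 ≤ u := by linarith
    have hS : 0 ≤ u ^ 2 + u * v + v ^ 2 := by positivity
    refine ⟨by nlinarith, by nlinarith, by linarith, by linarith, ?_, ?_⟩
    · rw [hfac]
      exact mul_nonneg h5 hS
    · rw [hfac]
      have hd : u - v ≤ 1 / 3 := by linarith
      have := mul_le_mul_of_nonneg_right hd hS
      nlinarith [sq_nonneg (u - v)]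
  have s2 : Summable fun P : {P : Polynomial Fq // P.Monic ∧ Irreducible P} =>
      uP P.1 ^ 2 + (-1 : ℝ) ^ 2 * vP P.1 ^ 2 :=
    Summable.of_nonneg_of_le (fun P => (key P).1.le) (fun P => (key P).2.1)
      ((summable_inv_sq Fq).mul_left 5)
  have s1 := Summable.of_nonneg_of_le (fun P => (key P).2.2.1) (fun P => (key P).2.2.2.1)
    (s2.mul_left (4 / 3))
  have s3 := Summable.of_nonneg_of_le (fun P => (key P).2.2.2.2.1) (fun P => (key P).2.2.2.2.2)
    (s2.mul_left (1 / 2))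
  have p2 : 0 < hfun Fq 2 :=
    s2.tsum_pos (fun P => (key P).1.le) ⟨X, monic_X, irreducible_X⟩ (key _).1
  have n3 : 0 ≤ hfun Fq 3 := tsum_nonneg fun P => (key P).2.2.2.2.1
  have b1 : hfun Fq 1 ≤ 4 / 3 * hfun Fq 2 := by
    unfold hfun
    rw [← tsum_mul_left]
    exact s1.tsum_le_tsum (fun P => (key P).2.2.2.1) (s2.mul_left _)
  have b3 : hfun Fq 3 ≤ 1 / 2 * hfun Fq 2 := by
    unfold hfun
    rw [← tsum_mul_left]
    exact s3.tsum_le_tsum (fun P => (key P).2.2.2.2.2) (s2.mul_left _)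
  calc hfun Fq 1 * hfun Fq 3 ≤ (4 / 3 * hfun Fq 2) * (1 / 2 * hfun Fq 2) :=
        mul_le_mul b1 b3 n3 (by positivity)
    _ < hfun Fq 2 ^ 2 := by nlinarith [pow_pos p2 2]
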